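/- Let C be a [q+1, k, d]_q MDS code of length n = q+1 with minimum distance d ≥ 3 (so d = q+2-k), and let w be a natural number with d - 1 ≤ w ≤ q+1. Then the overall number A_w^Σ(V^{(1)}) of Hamming-weight-w vectors lying in cosets of C of weight exactly 1 satisfies A_w^Σ(V^{(1)}) = C(q+1, w) · (q-1) · [ q^{w+2-d} - ∑_{i=0}^{w-d} (-1)^i ( C(w, i+1) - C(w, i) ) q^{w+1-d-i} - ε · ( C(w, d-1) - w · C(w-2, d-3) ) ], as an identity of integers. -/

import Mathlib

open Finset

/-- The weight of the coset `x + C` of the linear code `C ⊆ F_q^n`, i.e. the smallest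
Hamming weight of a vector in `x + C`; equivalently the Hamming distance from `x` to `C`. -/
noncomputable def cosetWeight {F : Type*} [Field F] [Fintype F] [DecidableEq F] {n : ℕ}
    (C : Submodule F (Fin n → F)) (x : Fin n → F) : ℕ :=
  sInf {m : ℕ | ∃ c ∈ C, hammingNorm (x - c) = m}

/-- `A_w(C)`: the number of codewords of `C` of Hamming weight `w`. -/
noncomputable def numCodewordsOfWeight {F : Type*} [Field F] [Fintype F] [DecidableEq F] {n : ℕ}
    (C : Submodule F (Fin n → F)) (w : ℕ) : ℕ :=
  {x : Fin n → F | x ∈ C ∧ hammingNorm x = w}.ncard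

/-- `A_w^Σ(V^{(W)})`: the overall number of Hamming-weight-`w` vectors of `F_q^n` lying in
cosets of `C` of weight exactly `W`. -/
noncomputable def numVectorsCosetExact {F : Type*} [Field F] [Fintype F] [DecidableEq F] {n : ℕ}
    (C : Submodule F (Fin n → F)) (w W : ℕ) : ℕ :=
  {x : Fin n → F | hammingNorm x = w ∧ cosetWeight C x = W}.ncard

/-- `A_w^Σ(V^{≤W})`: the overall number of Hamming-weight-`w` vectors of `F_q^n` lying in
cosets of `C` of weight at most `W`. -/
noncomputable def numVectorsCosetLe {F : Type*} [Field F] [Fintype F] [DecidableEq F] {n : ℕ}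
    (C : Submodule F (Fin n → F)) (w W : ℕ) : ℕ :=
  {x : Fin n → F | hammingNorm x = w ∧ cosetWeight C x ≤ W}.ncard

/-- The code `C` has minimum distance `d`: every nonzero codeword has Hamming weight at
least `d`, and some nonzero codeword has Hamming weight exactly `d`. -/
def HasMinDist {F : Type*} [Field F] [Fintype F] [DecidableEq F] {n : ℕ}
    (C : Submodule F (Fin n → F)) (d : ℕ) : Prop :=
  (∀ c ∈ C, c ≠ 0 → d ≤ hammingNorm c) ∧ ∃ c ∈ C, c ≠ 0 ∧ hammingNorm c = d

/-- The code `C` has covering radius `R`: every vector of `F_q^n` is at Hamming distance at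
most `R` from `C` and some vector is at Hamming distance exactly `R` from `C`. -/
def HasCoveringRadius {F : Type*} [Field F] [Fintype F] [DecidableEq F] {n : ℕ}
    (C : Submodule F (Fin n → F)) (R : ℕ) : Prop :=
  (∀ x : Fin n → F, cosetWeight C x ≤ R) ∧ ∃ x : Fin n → F, cosetWeight C x = R

/-- `V_m(t) = ∑_{i=0}^t (q-1)^i C(m,i)`, the volume of a Hamming sphere of radius `t`
in `F_q^m`, as a rational number. -/
def sphereVol (q m t : ℕ) : ℚ :=
  ∑ i ∈ Finset.range (t + 1), ((q : ℚ) - 1) ^ i * (m.choose i : ℚ)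


/-- shifted coefficient sums -/
def mdsU (q : ℤ) (N M : ℕ) : ℤ :=
  ∑ j ∈ Finset.range M, (-1 : ℤ) ^ j * (N.choose j : ℤ) * q ^ (M - 1 - j)

lemma mdsU_zero (q : ℤ) (N : ℕ) : mdsU q N 0 = 0 := by simp [mdsU]

lemma mdsU_succ (q : ℤ) (N M : ℕ) :
    mdsU q N (M + 1) = q * mdsU q N M + (-1) ^ M * (N.choose M : ℤ) := by
  unfold mdsU
  rw [Finset.sum_range_succ, Finset.mul_sum]
  congr 1
  · apply Finset.sum_congr rfl
    intro j hj
    have : j < M := Finset.mem_range.1 hj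
    rw [show M + 1 - 1 - j = (M - 1 - j) + 1 by omega, pow_succ]
    ring
  · simp

lemma mdsU_pascal (q : ℤ) (N M : ℕ) :
    mdsU q (N + 1) (M + 1) = mdsU q N (M + 1) - mdsU q N M := by
  induction M with
  | zero => simp [mdsU]
  | succ M ih =>
    rw [mdsU_succ q (N + 1), ih, mdsU_succ q N (M + 1), Nat.choose_succ_succ]
    have := mdsU_succ q N M
    push_cast
    linear_combination this

lemma mdsU_pascal' (q : ℤ) (N M : ℕ) :
    mdsU q (N + 1) M = mdsU q N M - mdsU q N (M - 1) := by
  cases M with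
  | zero => simp [mdsU_zero]
  | succ M => exact mdsU_pascal q N M

lemma mdsU_zero_left (q : ℤ) (M : ℕ) : mdsU q 0 (M + 1) = q ^ M := by
  induction M with
  | zero => simp [mdsU]
  | succ M ih => rw [mdsU_succ, ih]; simp [pow_succ, mul_comm]

lemma mds_sum_identity (q : ℤ) (w M : ℕ) :
    q ^ (M + 1) - ∑ i ∈ Finset.range M,
      (-1 : ℤ) ^ i * ((w.choose (i + 1) : ℤ) - (w.choose i : ℤ)) * q ^ (M - i)
      = q * mdsU q w (M + 1) + q * mdsU q w M := by
  induction M with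
  | zero => simp [mdsU]
  | succ M ih =>
    rw [Finset.sum_range_succ]
    have h : ∑ i ∈ Finset.range M,
      (-1 : ℤ) ^ i * ((w.choose (i + 1) : ℤ) - (w.choose i : ℤ)) * q ^ (M + 1 - i) =
      q * ∑ i ∈ Finset.range M,
      (-1 : ℤ) ^ i * ((w.choose (i + 1) : ℤ) - (w.choose i : ℤ)) * q ^ (M - i) := by
      rw [Finset.mul_sum]
      apply Finset.sum_congr rfl
      intro j hj
      have : j < M := Finset.mem_range.1 hj
      rw [show M + 1 - j = (M - j) + 1 by omega, pow_succ]
      ring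
    rw [h, mdsU_succ q w (M + 1)]
    have h2 := mdsU_succ q w M
    rw [show M + 1 - M = 1 by omega]
    have e : q ^ (M + 1 + 1) = q * q ^ (M + 1) := by ring
    rw [e]
    linear_combination q * ih - q * h2

lemma mds_final (q : ℤ) (u M : ℕ) :
    (u + 2 : ℤ) * (q - 1) * mdsU q u (M - 1) + (u + 2) * (q - 2) * mdsU q (u + 1) M
      + (q + 1 - (u + 2)) * mdsU q (u + 2) (M + 1)
      = q * mdsU q (u + 2) (M + 1) + q * mdsU q (u + 2) M
        + (-1) ^ M * (((u + 2).choose M : ℤ) - (u + 2) * (u.choose M : ℤ)) := by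
  have h1 := mdsU_succ q (u + 2) M
  have h2 := mdsU_pascal q (u + 1) M
  have h3 := mdsU_pascal q u M
  have h4 := mdsU_pascal' q u M
  have h5 := mdsU_succ q u M
  rw [show u + 1 + 1 = u + 2 from rfl] at h2
  linear_combination h1 - (u + 2 : ℤ) * h2 - (u + 2 : ℤ) * h3 + (u + 2 : ℤ) * (q - 1) * h4 - (u + 2 : ℤ) * h5

open Classical in
/-- codewords vanishing on `A` and nonzero everywhere on `B` -/
noncomputable def mdsZ {F : Type*} [Field F] [Fintype F] {n : ℕ}
    (C : Submodule F (Fin n → F)) (A B : Finset (Fin n)) : ℕ :=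
  (Finset.univ.filter fun x : Fin n → F =>
    x ∈ C ∧ (∀ i ∈ A, x i = 0) ∧ (∀ i ∈ B, x i ≠ 0)).card

lemma mdsZ_insert {F : Type*} [Field F] [Fintype F] {n : ℕ}
    (C : Submodule F (Fin n → F)) (A B : Finset (Fin n)) (b : Fin n) :
    mdsZ C A (insert b B) + mdsZ C (insert b A) B = mdsZ C A B := by
  classical
  unfold mdsZ
  rw [← Finset.card_filter_add_card_filter_not (s := Finset.univ.filter fun x : Fin n → F =>
    x ∈ C ∧ (∀ i ∈ A, x i = 0) ∧ (∀ i ∈ B, x i ≠ 0)) (fun x => x b ≠ 0)]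
  congr 2
  · ext x
    simp only [Finset.mem_filter, Finset.mem_univ, true_and, Finset.forall_mem_insert]
    tauto
  · ext x
    simp only [Finset.mem_filter, Finset.mem_univ, true_and, Finset.forall_mem_insert, not_not]
    tauto

lemma mds_vanish_zero {F : Type*} [Field F] [Fintype F] [DecidableEq F] {n d k : ℕ}
    (C : Submodule F (Fin n → F)) (hmin : ∀ c ∈ C, c ≠ 0 → d ≤ hammingNorm c)
    (hdk : d + k = n + 1) (A : Finset (Fin n)) (hA : k ≤ A.card) (x : Fin n → F) (hx : x ∈ C)
    (h : ∀ i ∈ A, x i = 0) : x = 0 := by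
  by_contra h0
  have h1 := hmin x hx h0
  have h2 : hammingNorm x ≤ (Aᶜ).card := by
    unfold hammingNorm
    apply Finset.card_le_card
    intro i hi
    simp only [Finset.mem_filter, Finset.mem_univ, true_and] at hi
    simp only [Finset.mem_compl]
    exact fun hh => hi (h i hh)
  rw [Finset.card_compl, Fintype.card_fin] at h2
  have : A.card ≤ n := by simpa using Finset.card_le_univ A
  omega

lemma mdsZ_empty {F : Type*} [Field F] [Fintype F] [DecidableEq F] {n d k : ℕ}
    (C : Submodule F (Fin n → F)) (hmin : ∀ c ∈ C, c ≠ 0 → d ≤ hammingNorm c)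
    (hdk : d + k = n + 1) (hk : Module.finrank F C = k) (hkn : k ≤ n) (A : Finset (Fin n)) :
    mdsZ C A ∅ = Fintype.card F ^ (k - A.card) := by
  classical
  rcases le_total k A.card with hA | hA
  · rw [Nat.sub_eq_zero_of_le hA, pow_zero]
    unfold mdsZ
    rw [Finset.card_eq_one]
    refine ⟨0, ?_⟩
    ext x
    simp only [Finset.mem_filter, Finset.mem_univ, true_and, Finset.mem_singleton]
    constructor
    · rintro ⟨h1, h2, _⟩
      exact mds_vanish_zero C hmin hdk A hA x h1 h2
    · rintro rfl
      simp [C.zero_mem]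
  · obtain ⟨K, hAK, hK⟩ := Finset.exists_superset_card_eq hA (by simpa using hkn)
    let f : C →ₗ[F] (K → F) := (LinearMap.funLeft F F (Subtype.val : K → Fin n)).comp C.subtype
    have hf : Function.Injective f := by
      rw [← LinearMap.ker_eq_bot, LinearMap.ker_eq_bot']
      intro m hm
      apply Subtype.ext
      apply mds_vanish_zero C hmin hdk K hK.ge m m.2
      intro i hi
      exact congrFun hm ⟨i, hi⟩
    have hfs : Function.Surjective f := by
      rw [← LinearMap.injective_iff_surjective_of_finrank_eq_finrank]
      · exact hf
      · simp [hk, hK]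
    let g : C →ₗ[F] (A → F) := (LinearMap.funLeft F F (Subtype.val : A → Fin n)).comp C.subtype
    have hgs : Function.Surjective g := by
      intro y
      obtain ⟨c, hc⟩ := hfs (fun i => if h : i.1 ∈ A then y ⟨i.1, h⟩ else 0)
      refine ⟨c, ?_⟩
      ext i
      have := congrFun hc ⟨i.1, hAK i.2⟩
      simpa [f, g, LinearMap.funLeft] using this
    have hr := LinearMap.finrank_range_add_finrank_ker g
    rw [LinearMap.range_eq_top.2 hgs, finrank_top, hk] at hr
    simp only [Module.finrank_fintype_fun_eq_card, Fintype.card_coe] at hr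
    have hc : Nat.card (LinearMap.ker g) = Fintype.card F ^ (k - A.card) := by
      rw [Module.natCard_eq_pow_finrank (K := F), Nat.card_eq_fintype_card]
      congr 1
      omega
    rw [← hc]
    unfold mdsZ
    rw [← Nat.card_eq_finsetCard]
    apply Nat.card_congr
    refine ⟨fun x => ⟨⟨x.1, ?_⟩, ?_⟩, fun x => ⟨x.1.1, ?_⟩, ?_, ?_⟩
    · have hx := x.2
      simp only [Finset.mem_filter, Finset.mem_univ, true_and] at hx
      exact hx.1
    · rw [LinearMap.mem_ker]
      ext i
      have hx := x.2
      simp only [Finset.mem_filter, Finset.mem_univ, true_and] at hx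
      exact hx.2.1 i.1 i.2
    · simp only [Finset.mem_filter, Finset.mem_univ, true_and]
      refine ⟨x.1.2, ?_, by simp⟩
      intro i hi
      exact congrFun (LinearMap.mem_ker.1 x.2) ⟨i, hi⟩
    · intro x; rfl
    · intro x; rfl

lemma mdsZ_formula {F : Type*} [Field F] [Fintype F] [DecidableEq F] {n d k : ℕ}
    (C : Submodule F (Fin n → F)) (hmin : ∀ c ∈ C, c ≠ 0 → d ≤ hammingNorm c)
    (hdk : d + k = n + 1) (hk : Module.finrank F C = k) (hkn : k ≤ n) (b : ℕ) :
    ∀ (A B : Finset (Fin n)), Disjoint A B → B.card = b + 1 →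
    (mdsZ C A B : ℤ) = ((Fintype.card F : ℤ) - 1) * mdsU (Fintype.card F) b (k - A.card) := by
  induction b with
  | zero =>
    intro A B hAB hB
    obtain ⟨x, rfl⟩ := Finset.card_eq_one.1 hB
    have h := mdsZ_insert C A ∅ x
    have hx : x ∉ A := by simpa using hAB
    rw [mdsZ_empty C hmin hdk hk hkn, mdsZ_empty C hmin hdk hk hkn,
      Finset.card_insert_of_notMem hx] at h
    simp only [insert_empty_eq] at h
    zify at h
    rcases Nat.eq_zero_or_eq_succ_pred (k - A.card) with h0 | h0
    · rw [h0, mdsU_zero]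
      rw [h0, show k - (A.card + 1) = 0 by omega] at h
      linarith
    · rw [h0, mdsU_zero_left]
      rw [h0, show k - (A.card + 1) = (k - A.card).pred by rw [Nat.pred_eq_sub_one]; omega, pow_succ] at h
      linarith
  | succ b ih =>
    intro A B hAB hB
    obtain ⟨x, B', hx, rfl, hB'⟩ := Finset.card_eq_succ.1 hB
    rw [Finset.disjoint_insert_right] at hAB
    have h := mdsZ_insert C A B' x
    zify at h
    rw [ih A B' hAB.2 hB', ih (insert x A) B' (by
      rw [Finset.disjoint_insert_left]; exact ⟨hx, hAB.2⟩) hB',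
      Finset.card_insert_of_notMem hAB.1] at h
    rw [mdsU_pascal', Nat.sub_sub]
    linarith

open Classical in
lemma mds_weight {F : Type*} [Field F] [Fintype F] [DecidableEq F] {n d k : ℕ}
    (C : Submodule F (Fin n → F)) (hmin : ∀ c ∈ C, c ≠ 0 → d ≤ hammingNorm c)
    (hdk : d + k = n + 1) (hk : Module.finrank F C = k) (hkn : k ≤ n) (v : ℕ) :
    ((Finset.univ.filter fun x : Fin n → F => x ∈ C ∧ hammingNorm x = v + 1).card : ℤ) =
      (n.choose (v + 1) : ℤ) * (((Fintype.card F : ℤ) - 1) * mdsU (Fintype.card F) v (v + 2 - d)) := by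
  have h1 : (Finset.univ.filter fun x : Fin n → F => x ∈ C ∧ hammingNorm x = v + 1).card
      = ∑ S ∈ (Finset.univ : Finset (Fin n)).powersetCard (v + 1), mdsZ C Sᶜ S := by
    rw [Finset.card_eq_sum_card_fiberwise (f := fun x : Fin n → F => Finset.univ.filter fun i => x i ≠ 0)
      (t := (Finset.univ : Finset (Fin n)).powersetCard (v + 1))]
    · apply Finset.sum_congr rfl
      intro S hS
      rw [Finset.mem_powersetCard] at hS
      unfold mdsZ
      congr 1
      ext x
      simp only [Finset.mem_filter, Finset.mem_univ, true_and, Finset.mem_compl]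
      constructor
      · rintro ⟨⟨a, b⟩, rfl⟩
        refine ⟨a, ?_, ?_⟩ <;> simp
      · rintro ⟨a, b, c⟩
        have : (Finset.univ.filter fun i => x i ≠ 0) = S := by
          ext i
          simp only [Finset.mem_filter, Finset.mem_univ, true_and]
          exact ⟨fun h => by_contra fun h' => h (b i h'), fun h => c i h⟩
        refine ⟨⟨a, ?_⟩, this⟩
        rw [← hS.2, ← this]
        rfl
    · intro x hx
      simp only [Finset.coe_filter, Finset.mem_univ, true_and, Set.mem_ofPred_eq] at hx
      simp only [Finset.mem_coe, Finset.mem_powersetCard]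
      exact ⟨Finset.subset_univ _, hx.2⟩
  rw [h1]
  push_cast
  rw [Finset.sum_congr rfl (g := fun _ => ((Fintype.card F : ℤ) - 1) * mdsU (Fintype.card F) v (v + 2 - d))]
  · rw [Finset.sum_const, Finset.card_powersetCard]
    simp
  · intro S hS
    rw [Finset.mem_powersetCard] at hS
    rw [mdsZ_formula C hmin hdk hk hkn v _ _ disjoint_compl_left hS.2, Finset.card_compl, hS.2,
      Fintype.card_fin]
    congr 2
    have : S.card ≤ n := by simpa using Finset.card_le_univ S
    omega

lemma hn_single {F : Type*} [Field F] [DecidableEq F] {n : ℕ} (c : Fin n → F) (i : Fin n) (a : F) :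
    hammingNorm (c + Pi.single i a) + (if c i ≠ 0 then 1 else 0)
      = hammingNorm c + (if c i + a ≠ 0 then 1 else 0) := by
  unfold hammingNorm
  rw [Finset.card_filter, Finset.card_filter, ← Finset.add_sum_erase _ _ (Finset.mem_univ i),
    ← Finset.add_sum_erase (a := i) (f := fun j => if c j ≠ 0 then 1 else 0) _ (Finset.mem_univ i)]
  have : ∑ x ∈ Finset.univ.erase i, (if (c + Pi.single i a : Fin n → F) x ≠ 0 then 1 else 0)
      = ∑ x ∈ Finset.univ.erase i, (if c x ≠ 0 then 1 else 0) := by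
    apply Finset.sum_congr rfl
    intro x hx
    rw [Pi.add_apply, Pi.single_eq_of_ne (Finset.ne_of_mem_erase hx), add_zero]
  rw [this, Pi.add_apply, Pi.single_eq_same]
  ring

lemma inner_count {F : Type*} [Field F] [Fintype F] [DecidableEq F] {n : ℕ} (c : Fin n → F)
    (i : Fin n) (w : ℕ) :
    (∑ a : F, if a ≠ 0 ∧ hammingNorm (c + Pi.single i a) = w then (1 : ℤ) else 0) =
      if c i ≠ 0 then ((Fintype.card F : ℤ) - 2) * (if hammingNorm c = w then 1 else 0)
        + (if hammingNorm c = w + 1 then 1 else 0)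
      else ((Fintype.card F : ℤ) - 1) * (if hammingNorm c + 1 = w then 1 else 0) := by
  by_cases hc : c i = 0
  · rw [if_neg (by simpa using hc)]
    have : ∀ a : F, (if a ≠ 0 ∧ hammingNorm (c + Pi.single i a) = w then (1 : ℤ) else 0)
        = (if hammingNorm c + 1 = w then 1 else 0)
          - (if a = 0 then (if hammingNorm c + 1 = w then 1 else 0) else 0) := by
      intro a
      have h := hn_single c i a
      by_cases ha : a = 0
      · simp [ha]
      · simp only [hc, ne_eq, not_true_eq_false, if_false, zero_add, ha, not_false_eq_true, if_true, add_zero] at h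
        simp [ha, h]
    simp only [this, Finset.sum_sub_distrib, Finset.sum_const, Finset.sum_ite_eq', Finset.mem_univ, if_true, Finset.card_univ, nsmul_eq_mul]
    ring
  · rw [if_pos hc]
    have : ∀ a : F, (if a ≠ 0 ∧ hammingNorm (c + Pi.single i a) = w then (1 : ℤ) else 0)
        = (if hammingNorm c = w then 1 else 0)
          - (if a = 0 then (if hammingNorm c = w then 1 else 0) else 0)
          + (if a = - c i then ((if hammingNorm c = w + 1 then 1 else 0) - (if hammingNorm c = w then 1 else 0)) else 0) := by
      intro a
      have h := hn_single c i a
      by_cases ha : a = 0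
      · have : a ≠ - c i := by rw [ha]; exact fun h => hc (neg_eq_zero.1 h.symm)
        subst ha
        simp [this]
      · by_cases ha' : a = - c i
        · have e : c i + a = 0 := by rw [ha']; ring
          simp only [hc, e, ne_eq, not_true_eq_false, not_false_eq_true, if_true, if_false, add_zero] at h
          rw [if_neg ha, if_pos ha']
          simp only [ha, ne_eq, not_false_eq_true, true_and]
          split_ifs <;> first | omega | simp
        · have e : c i + a ≠ 0 := fun e => ha' (by linear_combination e)
          simp only [hc, e, ne_eq, not_false_eq_true, if_true] at h
          have h' : hammingNorm (c + Pi.single i a) = hammingNorm c := by omega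
          simp [ha, ha', h']
    simp only [this, Finset.sum_add_distrib, Finset.sum_sub_distrib, Finset.sum_const, Finset.sum_ite_eq', Finset.mem_univ, if_true, Finset.card_univ, nsmul_eq_mul]
    ring

lemma outer_count {F : Type*} [Field F] [Fintype F] [DecidableEq F] {n : ℕ} (c : Fin n → F)
    (w : ℕ) :
    (∑ i : Fin n, ∑ a : F, if a ≠ 0 ∧ hammingNorm (c + Pi.single i a) = w then (1 : ℤ) else 0) =
      (w : ℤ) * ((Fintype.card F : ℤ) - 2) * (if hammingNorm c = w then 1 else 0)
        + (w + 1) * (if hammingNorm c = w + 1 then 1 else 0)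
      + ((n : ℤ) + 1 - w) * ((Fintype.card F : ℤ) - 1) * (if hammingNorm c + 1 = w then 1 else 0) := by
  simp only [inner_count]
  rw [Finset.sum_ite, Finset.sum_const, Finset.sum_const]
  have h1 : (Finset.univ.filter fun i => c i ≠ 0).card = hammingNorm c := rfl
  have h2 : (Finset.univ.filter fun i => ¬ (c i ≠ 0)).card + hammingNorm c = n := by
    rw [← h1, add_comm, Finset.card_filter_add_card_filter_not]; simp
  rw [h1, nsmul_eq_mul, nsmul_eq_mul]
  have h3 : ((Finset.univ.filter fun i => ¬ (c i ≠ 0)).card : ℤ) = n - hammingNorm c := by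
    have := congrArg (Nat.cast (R := ℤ)) h2
    push_cast at this ⊢
    linarith
  rw [h3]
  split_ifs <;> first
    | omega
    | (subst_vars; push_cast; ring)
    | (rename_i h; rw [h]; push_cast; ring)

lemma hn_eq_one {F : Type*} [Field F] [DecidableEq F] {n : ℕ} (x : Fin n → F)
    (h : hammingNorm x = 1) : ∃ i a, a ≠ 0 ∧ x = Pi.single i a := by
  unfold hammingNorm at h
  obtain ⟨i, hi⟩ := Finset.card_eq_one.1 h
  refine ⟨i, x i, ?_, ?_⟩
  · have : i ∈ ({i} : Finset (Fin n)) := by simp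
    rw [← hi] at this
    simpa using this
  · ext j
    by_cases hj : j = i
    · subst hj; simp
    · rw [Pi.single_eq_of_ne hj]
      by_contra h'
      have : j ∈ Finset.univ.filter fun i => x i ≠ 0 := by simpa using h'
      rw [hi] at this
      exact hj (by simpa using this)

lemma hn_single_one {F : Type*} [Field F] [DecidableEq F] {n : ℕ} (i : Fin n) (a : F) (ha : a ≠ 0) :
    hammingNorm (Pi.single i a : Fin n → F) = 1 := by
  have := hn_single (0 : Fin n → F) i a
  simpa [ha] using this

lemma hn_sub_le {F : Type*} [Field F] [DecidableEq F] {n : ℕ} (x y : Fin n → F) :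
    hammingNorm (x - y) ≤ hammingNorm x + hammingNorm y := by
  have := hammingDist_triangle x 0 y
  rw [hammingDist_zero_right, hammingDist_zero_left, hammingDist_comm, hammingDist_eq_hammingNorm] at this
  rw [show x - y = -y + x by abel]
  exact this

lemma cosetWeight_one_iff {F : Type*} [Field F] [Fintype F] [DecidableEq F] {n d : ℕ}
    (C : Submodule F (Fin n → F)) (hmin : ∀ c ∈ C, c ≠ 0 → d ≤ hammingNorm c) (hd : 3 ≤ d)
    (x : Fin n → F) : cosetWeight C x = 1 ↔ ∃ c ∈ C, hammingNorm (x - c) = 1 := by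
  unfold cosetWeight
  constructor
  · intro h
    have := Nat.sInf_mem (s := {m : ℕ | ∃ c ∈ C, hammingNorm (x - c) = m}) ⟨_, 0, C.zero_mem, rfl⟩
    rw [h] at this
    exact this
  · rintro ⟨c, hc, h⟩
    apply le_antisymm
    · exact Nat.sInf_le ⟨c, hc, h⟩
    · rw [Nat.one_le_iff_ne_zero]
      intro h0
      have := Nat.sInf_mem (s := {m : ℕ | ∃ c ∈ C, hammingNorm (x - c) = m}) ⟨_, 0, C.zero_mem, rfl⟩
      rw [h0] at this
      obtain ⟨c', hc', h'⟩ := this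
      rw [hammingNorm_eq_zero, sub_eq_zero] at h'
      subst h'
      have := hmin (x - c) (C.sub_mem hc' hc) (by rw [← hammingNorm_ne_zero_iff]; omega)
      omega

open Classical in
lemma main_count {F : Type*} [Field F] [Fintype F] [DecidableEq F] {n d : ℕ}
    (C : Submodule F (Fin n → F)) (hmin : ∀ c ∈ C, c ≠ 0 → d ≤ hammingNorm c) (hd : 3 ≤ d)
    (w : ℕ) :
    (numVectorsCosetExact C w 1 : ℤ) =
      ∑ c ∈ Finset.univ.filter (fun c : Fin n → F => c ∈ C), ∑ i : Fin n, ∑ a : F,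
        if a ≠ 0 ∧ hammingNorm (c + Pi.single i a) = w then (1 : ℤ) else 0 := by
  let T : Finset ((Fin n → F) × Fin n × F) := Finset.univ.filter fun t =>
    t.1 ∈ C ∧ t.2.2 ≠ 0 ∧ hammingNorm (t.1 + Pi.single t.2.1 t.2.2) = w
  have hT : (T.card : ℤ) = ∑ c ∈ Finset.univ.filter (fun c : Fin n → F => c ∈ C), ∑ i : Fin n, ∑ a : F,
        if a ≠ 0 ∧ hammingNorm (c + Pi.single i a) = w then (1 : ℤ) else 0 := by
    rw [Finset.sum_filter]
    simp only [T, Finset.card_filter]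
    push_cast
    rw [Fintype.sum_prod_type]
    apply Finset.sum_congr rfl
    intro c _
    rw [Fintype.sum_prod_type]
    by_cases hc : c ∈ C <;> simp [hc]
  rw [← hT]
  have hS : {x : Fin n → F | hammingNorm x = w ∧ cosetWeight C x = 1}
      = ↑(T.image fun t => t.1 + Pi.single t.2.1 t.2.2) := by
    ext x
    simp only [Set.mem_ofPred_eq, cosetWeight_one_iff C hmin hd, Finset.coe_image, Set.mem_image,
      Finset.mem_coe, T, Finset.mem_filter, Finset.mem_univ, true_and, Prod.exists]
    constructor
    · rintro ⟨hw, c, hc, h⟩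
      obtain ⟨i, a, ha, h⟩ := hn_eq_one _ h
      have e : c + Pi.single i a = x := by rw [← h]; abel
      exact ⟨c, i, a, ⟨hc, ha, by rw [e]; exact hw⟩, e⟩
    · rintro ⟨c, i, a, ⟨hc, ha, hw⟩, rfl⟩
      exact ⟨hw, c, hc, by rw [add_sub_cancel_left]; exact hn_single_one i a ha⟩
  unfold numVectorsCosetExact
  rw [hS, Set.ncard_coe_finset, Finset.card_image_of_injOn]
  rintro ⟨c, i, a⟩ h1 ⟨c', i', a'⟩ h2 h
  simp only [T, Finset.coe_filter, Finset.mem_univ, true_and, Set.mem_ofPred_eq] at h1 h2 h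
  have hcc : c = c' := by
    by_contra hne
    have e : c - c' = Pi.single i' a' - Pi.single i a := by
      rw [sub_eq_sub_iff_add_eq_add, h, add_comm]
    have k1 := hmin (c - c') (C.sub_mem h1.1 h2.1) (sub_ne_zero.2 hne)
    have k2 := hn_sub_le (Pi.single i' a' : Fin n → F) (Pi.single i a)
    rw [hn_single_one _ _ h1.2.1, hn_single_one _ _ h2.2.1, ← e] at k2
    omega
  subst hcc
  have h := add_left_cancel h
  have hii : i = i' := by
    by_contra hne
    have := congrFun h i
    rw [Pi.single_eq_same, Pi.single_eq_of_ne hne] at this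
    exact h1.2.1 this
  subst hii
  rw [Pi.single_injective i h]

/-- **Integral weight spectrum of the weight-1 cosets of an MDS code of length `q+1`**
(Theorem 4.4(ii), eq. (4.8)).  For a `[q+1,k,d]_q` MDS code with `d ≥ 3` and
`d-1 ≤ w ≤ q+1`,
`A_w^Σ(V^{(1)}) = C(q+1,w)(q-1)[ q^{w+2-d}
  - ∑_{i=0}^{w-d} (-1)^i (C(w,i+1)-C(w,i)) q^{w+1-d-i}
  - (-1)^{w-d} ( C(w,d-1) - w C(w-2,d-3) ) ]`. -/
theorem numVectorsCosetExact_one_length_q_add_one {F : Type*} [Field F] [Fintype F]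
    [DecidableEq F] (q k d w : ℕ) (hq : Fintype.card F = q)
    (C : Submodule F (Fin (q + 1) → F))
    (hk : Module.finrank F C = k) (hmin : HasMinDist C d) (hMDS : d + k = q + 2)
    (hd : 3 ≤ d) (hw1 : d - 1 ≤ w) (hwn : w ≤ q + 1) :
    (numVectorsCosetExact C w 1 : ℤ) =
      ((q + 1).choose w : ℤ) * ((q : ℤ) - 1) *
        ((q : ℤ) ^ (w + 2 - d)
          - ∑ i ∈ Finset.range (w + 1 - d),
              (-1 : ℤ) ^ i * ((w.choose (i + 1) : ℤ) - (w.choose i : ℤ)) *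
                (q : ℤ) ^ (w + 1 - d - i)
          - (-1 : ℤ) ^ (w + d) *
              ((w.choose (d - 1) : ℤ) - (w : ℤ) * ((w - 2).choose (d - 3) : ℤ))) := by
  classical
  have hmin' := hmin.1
  have hq2 : 1 ≤ d := by omega
  have hkn : k ≤ q + 1 := by omega
  have hdk : d + k = (q + 1) + 1 := by omega
  obtain ⟨u, rfl⟩ : ∃ u, w = u + 2 := ⟨w - 2, by omega⟩
  obtain ⟨M, hM⟩ : ∃ M, u + 3 = d + M := ⟨u + 3 - d, by omega⟩
  rw [main_count C hmin' hd]
  simp only [outer_count]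
  rw [Finset.sum_add_distrib, Finset.sum_add_distrib, ← Finset.mul_sum, ← Finset.mul_sum,
    ← Finset.mul_sum]
  have hA : ∀ v, ∑ c ∈ Finset.univ.filter (fun c : Fin (q + 1) → F => c ∈ C),
      (if hammingNorm c = v + 1 then (1 : ℤ) else 0) = ((q + 1).choose (v + 1) : ℤ) *
        (((q : ℤ) - 1) * mdsU q v (v + 2 - d)) := by
    intro v
    have := mds_weight C hmin' hdk hk hkn v
    rw [hq] at this
    rw [← this, Finset.sum_boole, Finset.filter_filter]
  have hA1 := hA u
  have hA2 := hA (u + 1)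
  have hA3 := hA (u + 2)
  simp only [show ∀ c : Fin (q + 1) → F, (hammingNorm c + 1 = u + 2) = (hammingNorm c = u + 1) from
    fun c => by simp]
  rw [hA1, hA2, hA3, hq]
  rw [show u + 2 + 2 - d = M + 1 by omega, show u + 2 + 1 - d = M by omega, show u + 2 - d = M - 1 by omega,
    mds_sum_identity]
  have hc1 : (u + 2).choose (d - 1) = (u + 2).choose M := by
    rw [← Nat.choose_symm (show d - 1 ≤ u + 2 by omega)]; congr 1; omega
  have hc2 : (u + 2 - 2).choose (d - 3) = u.choose M := by
    rw [Nat.add_sub_cancel, ← Nat.choose_symm (show d - 3 ≤ u by omega)]; congr 1; omega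
  have hs : (-1 : ℤ) ^ (u + 2 + d) = - (-1) ^ M := by
    have e : u + 2 + d + 1 = M + 2 * d := by omega
    have : (-1 : ℤ) ^ (u + 2 + d + 1) = (-1) ^ M := by rw [e, pow_add, pow_mul]; simp
    rw [pow_succ] at this
    linarith
  rw [hc1, hc2, hs]
  have hf := mds_final (q : ℤ) u M
  have b1 : ((q + 1).choose (u + 1 + 1) : ℤ) * (u + 2) = ((q + 1).choose (u + 1) : ℤ) * ((q : ℤ) + 1 - (u + 1)) := by
    have := Nat.choose_succ_right_eq (q + 1) (u + 1)
    zify [show u + 1 ≤ q + 1 by omega] at this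
    push_cast at this ⊢
    linarith
  have b2 : ((q + 1).choose (u + 2 + 1) : ℤ) * (u + 3) = ((q + 1).choose (u + 2) : ℤ) * ((q : ℤ) + 1 - (u + 2)) := by
    have := Nat.choose_succ_right_eq (q + 1) (u + 2)
    zify [hwn] at this
    push_cast at this ⊢
    linarith
  rw [show u + 1 + 1 = u + 2 from rfl] at b1 ⊢
  push_cast
  linear_combination ((q + 1).choose (u + 2) : ℤ) * ((q : ℤ) - 1) * hf
    - ((q : ℤ) - 1) ^ 2 * mdsU q u (M - 1) * b1 + ((q : ℤ) - 1) * mdsU q (u + 2) (M + 1) * b2
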